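/- For every τ in the complex upper half plane, f_{2,0}(τ)·f_{2,1}(τ) = E_{2,2}(τ); moreover f_{2,j}(((−1)ʲ + i)/2) = 0 for j ∈ {0,1}. -/

import Mathlib

open Complex

/-- `q = exp(2πiτ)`. -/
noncomputable def qq (τ : ℂ) : ℂ := Complex.exp (2 * Real.pi * Complex.I * τ)

/-- `σ_k(n) = Σ_{d ∣ n} d^k`, as a complex number. -/
noncomputable def sigmaC (k n : ℕ) : ℂ := ∑ d ∈ n.divisors, (d : ℂ) ^ k

/-- Eisenstein series `E₂(τ) = 1 - 24 Σ_{n≥1} σ₁(n) qⁿ`. -/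
noncomputable def E₂ (τ : ℂ) : ℂ := 1 - 24 * ∑' n : ℕ, sigmaC 1 (n + 1) * qq τ ^ (n + 1)

/-- Eisenstein series `E₄(τ) = 1 + 240 Σ_{n≥1} σ₃(n) qⁿ`. -/
noncomputable def E₄ (τ : ℂ) : ℂ := 1 + 240 * ∑' n : ℕ, sigmaC 3 (n + 1) * qq τ ^ (n + 1)

/-- Eisenstein series `E₆(τ) = 1 - 504 Σ_{n≥1} σ₅(n) qⁿ`. -/
noncomputable def E₆ (τ : ℂ) : ℂ := 1 - 504 * ∑' n : ℕ, sigmaC 5 (n + 1) * qq τ ^ (n + 1)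

/-- Dedekind eta function `η(τ) = exp(πiτ/12) ∏_{n≥1} (1 - qⁿ)`. -/
noncomputable def η (τ : ℂ) : ℂ :=
  Complex.exp (Real.pi * Complex.I * τ / 12) * ∏' n : ℕ, (1 - qq τ ^ (n + 1))

/-- Theta function `θ(τ) = Σ_{n ∈ ℤ} q^{n²}`. -/
noncomputable def θ (τ : ℂ) : ℂ := ∑' n : ℤ, qq τ ^ (n ^ 2)

/-- The character `χ₋₄`: `χ₋₄(d) = 1, -1, 0` according as `d ≡ 1, 3, 0/2 (mod 4)`. -/
noncomputable def χ₄ (d : ℕ) : ℂ := if d % 4 = 1 then 1 else if d % 4 = 3 then -1 else 0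

/-- The character `χ₋₃`: `χ₋₃(d) = 1, -1, 0` according as `d ≡ 1, 2, 0 (mod 3)`. -/
noncomputable def χ₃ (d : ℕ) : ℂ := if d % 3 = 1 then 1 else if d % 3 = 2 then -1 else 0

/-- `E_{1,-4}(τ) = 1/4 + Σ_{n≥1} (Σ_{d∣n} χ₋₄(d)) qⁿ`. -/
noncomputable def E₁₄ (τ : ℂ) : ℂ :=
  1 / 4 + ∑' n : ℕ, (∑ d ∈ (n + 1).divisors, χ₄ d) * qq τ ^ (n + 1)

/-- `E_{1,-3}(τ) = 1/6 + Σ_{n≥1} (Σ_{d∣n} χ₋₃(d)) qⁿ`. -/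
noncomputable def E₁₃ (τ : ℂ) : ℂ :=
  1 / 6 + ∑' n : ℕ, (∑ d ∈ (n + 1).divisors, χ₃ d) * qq τ ^ (n + 1)

/-- `E_{2,2}(τ) = 2E₂(2τ) - E₂(τ)`. -/
noncomputable def E₂₂ (τ : ℂ) : ℂ := 2 * E₂ (2 * τ) - E₂ τ

/-- `E_{2,4}(τ) = (4E₄(2τ) - E₄(τ))/3`. -/
noncomputable def E₂₄ (τ : ℂ) : ℂ := (4 * E₄ (2 * τ) - E₄ τ) / 3

/-- `E_{3,2}(τ) = (3E₂(3τ) - E₂(τ))/2`. -/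
noncomputable def E₃₂ (τ : ℂ) : ℂ := (3 * E₂ (3 * τ) - E₂ τ) / 2

/-- `E_{3,4}(τ) = (9E₄(3τ) - E₄(τ))/8`. -/
noncomputable def E₃₄ (τ : ℂ) : ℂ := (9 * E₄ (3 * τ) - E₄ τ) / 8

/-- `E_{4,2}(τ) = (4E₂(4τ) - E₂(τ))/3`. -/
noncomputable def E₄₂ (τ : ℂ) : ℂ := (4 * E₂ (4 * τ) - E₂ τ) / 3

/-- `E'_{4,2}(τ) = 4E₂(4τ) - 4E₂(2τ) + E₂(τ)`. -/
noncomputable def E₄₂' (τ : ℂ) : ℂ := 4 * E₂ (4 * τ) - 4 * E₂ (2 * τ) + E₂ τ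

/-- `f_{1,j}(τ) = 2E₂(τ) - ((3+(-1)ʲi√3)/6)E₂(τ/2) - ((3-(-1)ʲi√3)/6)E₂((τ+1)/2)`. -/
noncomputable def f₁ (j : ℕ) (τ : ℂ) : ℂ :=
  2 * E₂ τ - ((3 + (-1 : ℂ) ^ j * Complex.I * Real.sqrt 3) / 6) * E₂ (τ / 2)
    - ((3 - (-1 : ℂ) ^ j * Complex.I * Real.sqrt 3) / 6) * E₂ ((τ + 1) / 2)

/-- `g_{1,j}(τ) = (3/2)E₂(τ) - (1/4) Σ_{0≤m≤2, m≢j (mod 3)} E₂((τ+m)/3)`. -/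
noncomputable def g₁ (j : ℕ) (τ : ℂ) : ℂ :=
  (3 / 2) * E₂ τ -
    (1 / 4) * ∑ m ∈ (Finset.range 3).filter (fun m => ¬ m % 3 = j % 3), E₂ ((τ + m) / 3)

/-- `f_{2,j}(τ) = 4E_{1,-4}(τ) + (-1)ʲ·2i·(E_{1,-4}(τ/2) - E_{1,-4}((τ+1)/2))`. -/
noncomputable def f₂ (j : ℕ) (τ : ℂ) : ℂ :=
  4 * E₁₄ τ + (-1 : ℂ) ^ j * 2 * Complex.I * (E₁₄ (τ / 2) - E₁₄ ((τ + 1) / 2))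

/-- `f_{3,j}(τ) = 6E_{1,-3}(2τ) + (-1)ʲ·i√3·(E_{1,-3}(τ/2) - E_{1,-3}((τ+1)/2))`. -/
noncomputable def f₃ (j : ℕ) (τ : ℂ) : ℂ :=
  6 * E₁₃ (2 * τ) +
    (-1 : ℂ) ^ j * Complex.I * Real.sqrt 3 * (E₁₃ (τ / 2) - E₁₃ ((τ + 1) / 2))

/-- `f_{4,j}(τ) = θ(τ/2 - (-1)ʲ/4)`. -/
noncomputable def f₄ (j : ℕ) (τ : ℂ) : ℂ := θ (τ / 2 - (-1 : ℂ) ^ j / 4)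

/-- `g_{4,j}(τ) = 2θ(2τ)² - θ((τ+j)/2)²`. -/
noncomputable def g₄ (j : ℕ) (τ : ℂ) : ℂ := 2 * θ (2 * τ) ^ 2 - θ ((τ + j) / 2) ^ 2

/-- `E_{3,-3,1}(τ) = -1/9 + Σ_{n≥1} (Σ_{d∣n} d²χ₋₃(d)) qⁿ`. -/
noncomputable def E₃₃₁ (τ : ℂ) : ℂ :=
  -(1 / 9) + ∑' n : ℕ, (∑ d ∈ (n + 1).divisors, (d : ℂ) ^ 2 * χ₃ d) * qq τ ^ (n + 1)

/-- `E_{3,1,-3}(τ) = Σ_{n≥1} (Σ_{d∣n} d²χ₋₃(n/d)) qⁿ`. -/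
noncomputable def E₃₁₃ (τ : ℂ) : ℂ :=
  ∑' n : ℕ, (∑ d ∈ (n + 1).divisors, (d : ℂ) ^ 2 * χ₃ ((n + 1) / d)) * qq τ ^ (n + 1)

/-!
Expanding `sec` in powers of `q` gives `4 E₁₄ τ = ∑ₙ sec (2nπτ)`, so that
`f₂ j τ = A + (-1)ʲ i B` with `A = ∑ₙ sec (2nπτ)` and `B = ∑ₙ sec ((2n + 1)πτ)`, and
`f₂ 0 τ * f₂ 1 τ = A² + B²`. In each square, group the products of two secants by the difference of
their indices: `sin (u - v) sec u sec v = tan u - tan v` telescopes, and `tan` tends to `±i` in the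
two imaginary directions. What remains are the Lambert series of `E₂₂`.

The Fricke involution `τ ↦ -1 / (2τ)` followed by `τ ↦ τ + 1` fixes `(1 + i) / 2`, which forces
`E₂₂` to vanish there. At this point `f₂ 1` is the sum of an alternating series of values of
`1 / cosh` and one of values of `1 / sinh`, which is positive, so it is the factor `f₂ 0` that
vanishes. The zero of `f₂ 1` follows from `f₂ 0 (τ + 1) = f₂ 1 τ`.
-/

open Filter Topology
open scoped Real ArithmeticFunction.sigma

section IntSeries

variable {G : Type*} [AddCommGroup G] [UniformSpace G] [IsUniformAddGroup G] [CompleteSpace G]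
  [T2Space G] {f : ℤ → G}

lemma tsum_int_even_add_odd (hf : Summable f) :
    ∑' n, f n = ∑' n, f (2 * n) + ∑' n, f (2 * n + 1) := by
  have hinj := mul_right_injective₀ (two_ne_zero' ℤ)
  have hinj' := (add_left_injective (1 : ℤ)).comp hinj
  have he := hinj.hasSum_range_iff.mpr (hf.comp_injective hinj).hasSum
  have ho := hinj'.hasSum_range_iff.mpr (hf.comp_injective hinj').hasSum
  refine (he.add_isCompl ?_ ho).tsum_eq
  simpa [Function.comp_def] using Int.isCompl_even_odd

section Telescoping

variable {a b : G}

lemma hasSum_int_telescope (hs : Summable fun n ↦ f (n + 1) - f n)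
    (ha : Tendsto f atTop (𝓝 a)) (hb : Tendsto f atBot (𝓝 b)) :
    HasSum (fun n ↦ f (n + 1) - f n) (a - b) := by
  have hpos : HasSum (fun n : ℕ ↦ f (n + 1) - f n) (a - f 0) := by
    have hs' : Summable fun n : ℕ ↦ f (n + 1) - f n := hs.comp_injective Nat.cast_injective
    refine hs'.hasSum_iff_tendsto_nat.mpr ?_
    refine ((ha.comp tendsto_natCast_atTop_atTop).sub_const (f 0)).congr fun n ↦ ?_
    simpa using (Finset.sum_range_sub (fun n : ℕ ↦ f n) n).symm
  have hneg : HasSum (fun n : ℕ ↦ f (-(n + 1) + 1) - f (-(n + 1))) (f 0 - b) := by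
    have hinj : Function.Injective fun n : ℕ ↦ -((n : ℤ) + 1) := fun m n h ↦ by simpa using h
    have hs' : Summable fun n : ℕ ↦ f (-(n + 1) + 1) - f (-(n + 1)) := hs.comp_injective hinj
    refine hs'.hasSum_iff_tendsto_nat.mpr ?_
    have hbot : Tendsto (fun n : ℕ ↦ -(n : ℤ)) atTop atBot :=
      tendsto_neg_atTop_atBot.comp tendsto_natCast_atTop_atTop
    refine ((hb.comp hbot).const_sub (f 0)).congr fun n ↦ ?_
    simpa using (Finset.sum_range_sub' (fun n : ℕ ↦ f (-n)) n).symm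
  rw [← sub_add_sub_cancel a (f 0) b]
  exact .of_nat_of_neg_add_one hpos hneg

lemma hasSum_int_telescope_add (hs : Summable fun n ↦ f (n + 1) - f n)
    (ha : Tendsto f atTop (𝓝 a)) (hb : Tendsto f atBot (𝓝 b)) (k : ℕ) :
    HasSum (fun n ↦ f (n + k) - f n) (k • (a - b)) := by
  induction k with
  | zero => simp
  | succ k ih =>
    have h := (Equiv.addRight (k : ℤ)).hasSum_iff.mpr (hasSum_int_telescope hs ha hb)
    simpa [succ_nsmul', Function.comp_def, add_assoc] using h.add ih

end Telescoping

section Autocorrelation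

variable {R : Type*} [NormedCommRing R] [CompleteSpace R] {f : ℤ → R}

/-- The shear `(k, n) ↦ (n + k, n)` of `ℤ × ℤ`, which groups the products `f m * f n` according
to the difference `k = m - n`. -/
def intShear : ℤ × ℤ ≃ ℤ × ℤ where
  toFun p := (p.2 + p.1, p.2)
  invFun p := (p.1 - p.2, p.2)
  left_inv p := by simp
  right_inv p := by simp

lemma summable_mul_comp_intShear (hf : Summable fun n ↦ ‖f n‖) :
    Summable fun p : ℤ × ℤ ↦ f (p.2 + p.1) * f p.2 :=
  intShear.summable_iff.mpr (summable_mul_of_summable_norm hf hf)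

lemma summable_add_mul (hf : Summable fun n ↦ ‖f n‖) (k : ℤ) :
    Summable fun n ↦ f (n + k) * f n :=
  (summable_mul_comp_intShear hf).prod_factor k

lemma tsum_sq_eq_tsum_add_mul (hf : Summable fun n ↦ ‖f n‖) :
    (∑' n, f n) ^ 2 = ∑' n, f n ^ 2 + 2 * ∑' k : ℕ+, ∑' n, f (n + (k : ℕ)) * f n := by
  have hs := summable_mul_comp_intShear hf
  have heven : Function.Even fun k : ℤ ↦ ∑' n, f (n + k) * f n := fun k ↦ by
    refine ((Equiv.addRight k).tsum_eq _).symm.trans (tsum_congr fun n ↦ ?_)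
    simp [mul_comm]
  calc (∑' n, f n) ^ 2
    _ = ∑' p : ℤ × ℤ, f p.1 * f p.2 := by rw [sq, tsum_mul_tsum_of_summable_norm hf hf]
    _ = ∑' p : ℤ × ℤ, f (p.2 + p.1) * f p.2 := (intShear.tsum_eq _).symm
    _ = ∑' k, ∑' n, f (n + k) * f n := hs.tsum_prod
    _ = _ := by
      rw [tsum_int_eq_zero_add_two_mul_tsum_pnat heven hs.prod]
      simp [sq]

end Autocorrelation

end IntSeries

section LambertSeries

section NormedRing

variable {R : Type*} [NormedRing R] [NormOneClass R] {x : R}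

lemma norm_pow_lt_one (hx : ‖x‖ < 1) {n : ℕ} (hn : n ≠ 0) : ‖x ^ n‖ < 1 :=
  (norm_pow_le x n).trans_lt (pow_lt_one₀ (norm_nonneg x) hx hn)

lemma one_sub_ne_zero_of_norm_lt_one (hx : ‖x‖ < 1) : 1 - x ≠ 0 := fun h ↦ by
  simp [← sub_eq_zero.mp h] at hx

lemma one_add_ne_zero_of_norm_lt_one (hx : ‖x‖ < 1) : 1 + x ≠ 0 := by
  simpa using one_sub_ne_zero_of_norm_lt_one ((norm_neg x).trans_lt hx)

end NormedRing

lemma tsum_sum_divisors_mul_pow {R : Type*} [NormedCommRing R] [CompleteSpace R] {x : R}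
    {f : ℕ → R} (hf : Summable fun c : ℕ+ × ℕ+ ↦ f c.2 * x ^ (c.1 * c.2 : ℕ)) :
    ∑' n : ℕ+, (∑ d ∈ (n : ℕ).divisors, f d) * x ^ (n : ℕ) =
      ∑' (m : ℕ+) (d : ℕ+), f d * x ^ (m * d : ℕ) := by
  have hf' := sigmaAntidiagonalEquivProd.summable_iff.mpr hf
  rw [← hf.tsum_prod, ← sigmaAntidiagonalEquivProd.tsum_eq]
  refine (tsum_congr fun n ↦ ?_).trans hf'.tsum_sigma.symm
  rw [← Nat.sum_divisorsAntidiagonal' (f := fun _ d ↦ f d), Finset.sum_mul, tsum_fintype,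
    ← Finset.sum_coe_sort]
  refine Finset.sum_congr rfl fun p _ ↦ ?_
  have hp := (Nat.mem_divisorsAntidiagonal.mp p.2).1
  simp [sigmaAntidiagonalEquivProd, divisorsAntidiagonalFactors, hp]

variable {x : ℂ}

/-- The generating series `∑ σ₁(n) xⁿ`, in terms of which `E₂ = 1 - 24 ∑ σ₁(n) qⁿ`. -/
noncomputable def sigmaSeries (x : ℂ) : ℂ := ∑' n : ℕ+, σ 1 n * x ^ (n : ℕ)

lemma sigmaSeries_eq_tsum_mul (hx : ‖x‖ < 1) :
    sigmaSeries x = ∑' n : ℕ+, n * x ^ (n : ℕ) / (1 - x ^ (n : ℕ)) := by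
  simpa [sigmaSeries] using (tsum_pow_div_one_sub_eq_tsum_sigma hx 1).symm

lemma sigmaSeries_eq_tsum_sq (hx : ‖x‖ < 1) :
    sigmaSeries x = ∑' n : ℕ+, x ^ (n : ℕ) / (1 - x ^ (n : ℕ)) ^ 2 := by
  rw [sigmaSeries, ← tsum_prod_pow_eq_tsum_sigma 1 hx]
  refine tsum_congr fun d ↦ ?_
  rw [← tsum_coe_mul_geometric_of_norm_lt_one (norm_pow_lt_one hx d.ne_zero),
    ← tsum_pnat_eq_tsum_of_eq_zero (f := fun n : ℕ ↦ (n : ℂ) * (x ^ (d : ℕ)) ^ n) (by simp)]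
  simp [pow_mul]

lemma summable_mul_pow_div_one_sub_pow (hx : ‖x‖ < 1) :
    Summable fun n : ℕ+ ↦ n * x ^ (n : ℕ) / (1 - x ^ (n : ℕ)) := by
  refine (summable_pnat_iff_summable_nat (f := fun n : ℕ ↦ n * x ^ n / (1 - x ^ n))).mpr ?_
  simpa using summable_norm_pow_mul_geometric_div_one_sub 1 hx

lemma summable_pow_div_one_sub_pow_sq (hx : ‖x‖ < 1) :
    Summable fun n : ℕ+ ↦ x ^ (n : ℕ) / (1 - x ^ (n : ℕ)) ^ 2 := by
  refine (summable_pnat_iff_summable_nat (f := fun n : ℕ ↦ x ^ n / (1 - x ^ n) ^ 2)).mpr ?_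
  have hlim : Tendsto (fun n : ℕ ↦ ((1 - x ^ n) ^ 2)⁻¹) cofinite (𝓝 1) := by
    rw [Nat.cofinite_eq_atTop]
    simpa using (((tendsto_pow_atTop_nhds_zero_of_norm_lt_one hx).const_sub 1).pow 2).inv₀
      (by simp)
  exact (summable_geometric_of_norm_lt_one hx).norm.mul_tendsto_const hlim

lemma tsum_pow_div_one_add_pow_sq (hx : ‖x‖ < 1) :
    ∑' n : ℕ+, x ^ (n : ℕ) / (1 + x ^ (n : ℕ)) ^ 2 =
      sigmaSeries x - 4 * sigmaSeries (x ^ 2) := by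
  have hx2 := norm_pow_lt_one hx two_ne_zero
  rw [sigmaSeries_eq_tsum_sq hx, sigmaSeries_eq_tsum_sq hx2, ← tsum_mul_left,
    ← (summable_pow_div_one_sub_pow_sq hx).tsum_sub
      ((summable_pow_div_one_sub_pow_sq hx2).mul_left 4)]
  refine tsum_congr fun n ↦ ?_
  have hy := norm_pow_lt_one hx n.ne_zero
  rw [pow_right_comm]
  generalize x ^ (n : ℕ) = y at hy
  have hsub := one_sub_ne_zero_of_norm_lt_one hy
  have hadd := one_add_ne_zero_of_norm_lt_one hy
  rw [show 1 - y ^ 2 = (1 - y) * (1 + y) by ring]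
  field_simp
  ring

lemma tsum_mul_pow_div_one_sub_pow_sq (hx : ‖x‖ < 1) :
    ∑' n : ℕ+, n * x ^ (n : ℕ) / (1 - (x ^ (n : ℕ)) ^ 2) =
      sigmaSeries x - sigmaSeries (x ^ 2) := by
  have hx2 := norm_pow_lt_one hx two_ne_zero
  rw [sigmaSeries_eq_tsum_mul hx, sigmaSeries_eq_tsum_mul hx2,
    ← (summable_mul_pow_div_one_sub_pow hx).tsum_sub (summable_mul_pow_div_one_sub_pow hx2)]
  refine tsum_congr fun n ↦ ?_
  have hy := norm_pow_lt_one hx n.ne_zero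
  rw [pow_right_comm x 2]
  generalize x ^ (n : ℕ) = y at hy
  have hsub := one_sub_ne_zero_of_norm_lt_one hy
  have hadd := one_add_ne_zero_of_norm_lt_one hy
  rw [show 1 - y ^ 2 = (1 - y) * (1 + y) by ring]
  field_simp
  ring

lemma norm_χ₄_le_one (d : ℕ) : ‖χ₄ d‖ ≤ 1 := by
  unfold χ₄
  split_ifs <;> simp

lemma χ₄_two_mul (k : ℕ) : χ₄ (2 * k) = 0 := by
  rw [χ₄, if_neg (by lia), if_neg (by lia)]

lemma χ₄_two_mul_add_one (k : ℕ) : χ₄ (2 * k + 1) = (-1) ^ k := by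
  rcases k.even_or_odd' with ⟨m, rfl | rfl⟩
  · rw [χ₄, if_pos (by lia)]
    simp
  · rw [χ₄, if_neg (by lia), if_pos (by lia)]
    simp [pow_succ]

lemma hasSum_χ₄_mul_pow (hx : ‖x‖ < 1) :
    HasSum (fun k : ℕ ↦ χ₄ k * x ^ k) (x / (1 + x ^ 2)) := by
  have heven : HasSum (fun k : ℕ ↦ χ₄ (2 * k) * x ^ (2 * k)) 0 := by simp [χ₄_two_mul]
  have hodd : HasSum (fun k : ℕ ↦ χ₄ (2 * k + 1) * x ^ (2 * k + 1)) (x / (1 + x ^ 2)) := by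
    have hgeom := (hasSum_geometric_of_norm_lt_one (ξ := -x ^ 2)
      (by simpa using norm_pow_lt_one hx two_ne_zero)).mul_left x
    rw [sub_neg_eq_add, ← div_eq_mul_inv] at hgeom
    have hterm (k : ℕ) : χ₄ (2 * k + 1) * x ^ (2 * k + 1) = x * (-x ^ 2) ^ k := by
      rw [χ₄_two_mul_add_one, neg_pow (x ^ 2) k, pow_succ, pow_mul]
      ring
    simpa only [hterm] using hgeom
  simpa using HasSum.even_add_odd (f := fun k ↦ χ₄ k * x ^ k) heven hodd

lemma summable_χ₄_mul_pow (hx : ‖x‖ < 1) :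
    Summable fun c : ℕ+ × ℕ+ ↦ χ₄ c.2 * x ^ (c.1 * c.2 : ℕ) := by
  refine (summable_prod_mul_pow 0 hx).norm.of_norm_bounded fun c ↦ ?_
  rw [norm_mul, norm_mul]
  gcongr
  simpa using norm_χ₄_le_one c.2

lemma tsum_sum_divisors_χ₄_mul_pow (hx : ‖x‖ < 1) :
    ∑' n : ℕ+, (∑ d ∈ (n : ℕ).divisors, χ₄ d) * x ^ (n : ℕ) =
      ∑' n : ℕ+, x ^ (n : ℕ) / (1 + (x ^ (n : ℕ)) ^ 2) := by
  rw [tsum_sum_divisors_mul_pow (summable_χ₄_mul_pow hx)]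
  refine tsum_congr fun m ↦ ?_
  rw [← (hasSum_χ₄_mul_pow (norm_pow_lt_one hx m.ne_zero)).tsum_eq,
    ← tsum_pnat_eq_tsum_of_eq_zero (f := fun k : ℕ ↦ χ₄ k * (x ^ (m : ℕ)) ^ k) (by simp [χ₄])]
  simp only [pow_mul]

end LambertSeries

section Trigonometry

lemma cos_ne_zero_of_im_ne_zero {z : ℂ} (hz : z.im ≠ 0) : cos z ≠ 0 := by
  rw [Ne, cos_eq_zero_iff]
  rintro ⟨k, rfl⟩
  exact hz (by simp)

lemma inv_cos_eq (z : ℂ) : (cos z)⁻¹ = 2 * exp (z * I) / (1 + exp (z * I) ^ 2) := by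
  have h : 2 * exp (z * I) * cos z = 1 + exp (z * I) ^ 2 := by
    rw [mul_right_comm, two_cos, neg_mul, exp_neg]
    field_simp [exp_ne_zero (z * I)]
    ring
  rw [← h, div_mul_cancel_left₀ (mul_ne_zero two_ne_zero (exp_ne_zero _))]

lemma inv_sin_eq (z : ℂ) : (sin z)⁻¹ = -2 * I * exp (z * I) / (1 - exp (z * I) ^ 2) := by
  have h : -2 * I * exp (z * I) * sin z = 1 - exp (z * I) ^ 2 := by
    rw [show -2 * I * exp (z * I) * sin z = -I * exp (z * I) * (2 * sin z) by ring, two_sin,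
      neg_mul z, exp_neg]
    field_simp [exp_ne_zero (z * I)]
    rw [I_sq, mul_comm I z]
    ring
  rw [← h, div_mul_cancel_left₀ (by simp [exp_ne_zero])]

lemma tan_eq_exp (z : ℂ) : tan z = I * (1 - exp (z * I) ^ 2) / (1 + exp (z * I) ^ 2) := by
  rw [tan_eq_sin_div_cos, div_eq_mul_inv, ← inv_inv (sin z), inv_sin_eq, inv_cos_eq]
  field_simp [exp_ne_zero (z * I)]
  rw [I_sq]
  ring

lemma tendsto_tan_comap_im_atTop : Tendsto tan (comap im atTop) (𝓝 I) := by
  have hexp : Tendsto (fun z ↦ exp (z * I)) (comap im atTop) (𝓝 0) := by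
    refine tendsto_exp_comap_re_atBot.comp (tendsto_comap_iff.mpr ?_)
    simpa [Function.comp_def] using
      (tendsto_neg_atTop_atBot (G := ℝ)).comp tendsto_comap
  have hlim := (((hexp.pow 2).const_sub 1).const_mul I).div ((hexp.pow 2).const_add 1) (by simp)
  rw [funext tan_eq_exp]
  simpa [Pi.div_def] using hlim

lemma tendsto_tan_comap_im_atBot : Tendsto tan (comap im atBot) (𝓝 (-I)) := by
  have hneg : Tendsto (fun z : ℂ ↦ -z) (comap im atBot) (comap im atTop) :=
    tendsto_comap_iff.mpr (tendsto_neg_atBot_atTop.comp tendsto_comap)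
  simpa [Function.comp_def, tan_neg] using (tendsto_tan_comap_im_atTop.comp hneg).neg

lemma sin_sub_mul_inv_cos_mul_inv_cos {u v : ℂ} (hu : cos u ≠ 0) (hv : cos v ≠ 0) :
    sin (u - v) * ((cos u)⁻¹ * (cos v)⁻¹) = tan u - tan v := by
  rw [tan_eq_sin_div_cos, tan_eq_sin_div_cos, sin_sub]
  field_simp

end Trigonometry

section SecantSums

variable {a z : ℂ}

lemma norm_exp_mul_I_lt_one (hz : 0 < z.im) : ‖exp (z * I)‖ < 1 := by
  simpa [norm_exp] using hz

lemma summable_nat_inv_cos_add_mul (a : ℂ) (hz : 0 < z.im) :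
    Summable fun n : ℕ ↦ (cos (a + n * z))⁻¹ := by
  have hx := norm_exp_mul_I_lt_one hz
  have hexp (n : ℕ) : exp ((a + n * z) * I) = exp (a * I) * exp (z * I) ^ n := by
    rw [← exp_nat_mul, ← exp_add]
    ring_nf
  have hlim : Tendsto (fun n : ℕ ↦ exp (a * I) * exp (z * I) ^ n) atTop (𝓝 0) := by
    simpa using (tendsto_pow_atTop_nhds_zero_of_norm_lt_one hx).const_mul (exp (a * I))
  have hlim' : Tendsto (fun n : ℕ ↦ (1 + (exp (a * I) * exp (z * I) ^ n) ^ 2)⁻¹) atTop (𝓝 1) := by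
    simpa using ((hlim.pow 2).const_add 1).inv₀ (by simp)
  rw [← Nat.cofinite_eq_atTop] at hlim'
  simpa [inv_cos_eq, hexp, div_eq_mul_inv, mul_assoc] using
    ((summable_geometric_of_norm_lt_one hx).norm.mul_tendsto_const hlim').mul_left
      (2 * exp (a * I))

lemma summable_inv_cos_add_mul (a : ℂ) (hz : 0 < z.im) :
    Summable fun n : ℤ ↦ (cos (a + n * z))⁻¹ := by
  refine .of_nat_of_neg (by simpa using summable_nat_inv_cos_add_mul a hz) ?_
  refine (summable_nat_inv_cos_add_mul (-a) hz).congr fun n ↦ ?_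
  rw [← cos_neg]
  congr 2
  push_cast
  ring

lemma summable_inv_cos_mul_sq (hz : 0 < z.im) : Summable fun n : ℤ ↦ (cos (n * z))⁻¹ ^ 2 := by
  simpa [sq] using summable_add_mul (summable_inv_cos_add_mul 0 hz).norm 0

/-- The sum of secants `∑ₙ sec (a + n z)` over the arithmetic progression through `a` with common
difference `z`; it converges for `z.im ≠ 0`. -/
noncomputable def secSum (a z : ℂ) : ℂ := ∑' n : ℤ, (cos (a + n * z))⁻¹

lemma secSum_eq_add (a : ℂ) (hz : 0 < z.im) :
    secSum a z = secSum a (2 * z) + secSum (a + z) (2 * z) := by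
  have heven (n : ℤ) : a + (2 * n : ℤ) * z = a + n * (2 * z) := by push_cast; ring
  have hodd (n : ℤ) : a + (2 * n + 1 : ℤ) * z = a + z + n * (2 * z) := by push_cast; ring
  rw [secSum, tsum_int_even_add_odd (summable_inv_cos_add_mul a hz)]
  simp only [heven, hodd, secSum]

lemma secSum_add_pi (a : ℂ) (hz : 0 < z.im) :
    secSum a (z + π) = secSum a (2 * z) - secSum (a + z) (2 * z) := by
  have heven (n : ℤ) : cos (a + (2 * n : ℤ) * (z + π)) = cos (a + n * (2 * z)) := by
    rw [← cos_add_int_mul_two_pi (a + n * (2 * z)) n]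
    push_cast
    ring_nf
  have hodd (n : ℤ) : cos (a + (2 * n + 1 : ℤ) * (z + π)) = -cos (a + z + n * (2 * z)) := by
    rw [← cos_add_pi, ← cos_add_int_mul_two_pi (a + z + n * (2 * z) + π) n]
    push_cast
    ring_nf
  rw [secSum, tsum_int_even_add_odd (summable_inv_cos_add_mul a (by simpa using hz))]
  simp only [heven, hodd, inv_neg, tsum_neg, secSum, sub_eq_add_neg]

lemma tsum_inv_cos_mul_inv_cos (hz : 0 < z.im) (hcos : ∀ n : ℤ, cos (a + n * z) ≠ 0)
    {k : ℕ} (hk : k ≠ 0) :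
    ∑' n : ℤ, (cos (a + (n + (k : ℕ) : ℤ) * z))⁻¹ * (cos (a + n * z))⁻¹ =
      2 * I * (k / sin (k * z)) := by
  have hdiff (k : ℕ) (n : ℤ) : tan (a + (n + k : ℤ) * z) - tan (a + n * z) =
      sin (k * z) * ((cos (a + (n + k : ℤ) * z))⁻¹ * (cos (a + n * z))⁻¹) := by
    rw [← sin_sub_mul_inv_cos_mul_inv_cos (hcos _) (hcos _)]
    congr 2
    push_cast
    ring
  have htop : Tendsto (fun n : ℤ ↦ tan (a + n * z)) atTop (𝓝 I) := by
    refine tendsto_tan_comap_im_atTop.comp (tendsto_comap_iff.mpr ?_)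
    simpa [Function.comp_def] using tendsto_atTop_add_const_left _ a.im
      (tendsto_intCast_atTop_atTop.atTop_mul_const hz)
  have hbot : Tendsto (fun n : ℤ ↦ tan (a + n * z)) atBot (𝓝 (-I)) := by
    refine tendsto_tan_comap_im_atBot.comp (tendsto_comap_iff.mpr ?_)
    simpa [Function.comp_def] using tendsto_atBot_add_const_left _ a.im
      ((tendsto_intCast_atBot_iff.mpr tendsto_id).atBot_mul_const hz)
  have hsum : Summable fun n : ℤ ↦ tan (a + (n + 1 : ℤ) * z) - tan (a + n * z) :=
    ((summable_add_mul (summable_inv_cos_add_mul a hz).norm 1).mul_left (sin ((1 : ℕ) * z))).congr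
      fun n ↦ (hdiff 1 n).symm
  have htel := (hasSum_int_telescope_add (f := fun n ↦ tan (a + n * z)) hsum htop hbot k).tsum_eq
  simp only [hdiff, tsum_mul_left] at htel
  have hsin : sin (k * z) ≠ 0 := left_ne_zero_of_mul (htel.trans_ne (by simp [hk, ← two_mul]))
  rw [eq_div_of_mul_eq hsin ((mul_comm _ _).trans htel), nsmul_eq_mul]
  ring

lemma secSum_sq (hz : 0 < z.im) (hcos : ∀ n : ℤ, cos (a + n * z) ≠ 0) :
    secSum a z ^ 2 =
      ∑' n : ℤ, (cos (a + n * z))⁻¹ ^ 2 + 4 * I * ∑' k : ℕ+, (k : ℂ) / sin (k * z) := by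
  have h := tsum_sq_eq_tsum_add_mul (summable_inv_cos_add_mul a hz).norm
  simp only [tsum_inv_cos_mul_inv_cos hz hcos (PNat.ne_zero _), tsum_mul_left] at h
  rw [secSum, h]
  ring

lemma cos_intCast_mul_ne_zero (hz : z.im ≠ 0) (n : ℤ) : cos (n * z) ≠ 0 := by
  rcases eq_or_ne n 0 with rfl | hn
  · simp
  · exact cos_ne_zero_of_im_ne_zero (by simp [hn, hz])

lemma secSum_sq_add_secSum_sq (hz : 0 < z.im) :
    secSum 0 (2 * z) ^ 2 + secSum z (2 * z) ^ 2 =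
      ∑' n : ℤ, (cos (n * z))⁻¹ ^ 2 + 8 * I * ∑' k : ℕ+, (k : ℂ) / sin (k * (2 * z)) := by
  have hz2 : 0 < (2 * z).im := by simpa using hz
  have heven (n : ℤ) : 0 + n * (2 * z) = (2 * n : ℤ) * z := by push_cast; ring
  have hodd (n : ℤ) : z + n * (2 * z) = (2 * n + 1 : ℤ) * z := by push_cast; ring
  rw [secSum_sq hz2 fun n ↦ heven n ▸ cos_intCast_mul_ne_zero hz.ne' _,
    secSum_sq hz2 fun n ↦ hodd n ▸ cos_intCast_mul_ne_zero hz.ne' _,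
    tsum_int_even_add_odd (summable_inv_cos_mul_sq hz)]
  simp only [heven, hodd]
  ring

end SecantSums

section Product

lemma qq_add_one (τ : ℂ) : qq (τ + 1) = qq τ := by
  rw [qq, qq, mul_add, mul_one, exp_periodic]

lemma qq_two_mul (τ : ℂ) : qq (2 * τ) = qq τ ^ 2 := by
  rw [qq, qq, ← exp_nat_mul]
  push_cast
  ring_nf

lemma exp_nat_mul_eq_qq_pow (n : ℕ) (τ : ℂ) : exp (n * (2 * (π * τ)) * I) = qq τ ^ n := by
  rw [qq, ← exp_nat_mul]
  ring_nf

lemma norm_qq_lt_one {τ : ℂ} (hτ : 0 < τ.im) : ‖qq τ‖ < 1 := by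
  rw [qq, mul_right_comm]
  exact norm_exp_mul_I_lt_one (by simpa [mul_assoc] using mul_pos Real.pi_pos hτ)

lemma E₂_eq_sigmaSeries (τ : ℂ) : E₂ τ = 1 - 24 * sigmaSeries (qq τ) := by
  rw [E₂, sigmaSeries, tsum_pnat_eq_tsum_succ (f := fun n : ℕ ↦ (σ 1 n : ℂ) * qq τ ^ n)]
  simp [sigmaC, ArithmeticFunction.sigma_apply]

lemma E₂₂_eq_sigmaSeries (τ : ℂ) :
    E₂₂ τ = 1 + 24 * sigmaSeries (qq τ) - 48 * sigmaSeries (qq τ ^ 2) := by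
  rw [E₂₂, E₂_eq_sigmaSeries, E₂_eq_sigmaSeries, qq_two_mul]
  ring

variable {τ : ℂ}

lemma im_pi_mul_pos (hτ : 0 < τ.im) : 0 < (π * τ : ℂ).im := by
  simpa using mul_pos Real.pi_pos hτ

lemma four_mul_E₁₄_eq_secSum (hτ : 0 < τ.im) : 4 * E₁₄ τ = secSum 0 (2 * (π * τ)) := by
  have heven : Function.Even fun n : ℤ ↦ (cos (0 + n * (2 * (π * τ))))⁻¹ := fun n ↦ by simp
  rw [E₁₄, ← tsum_pnat_eq_tsum_succ (f := fun n : ℕ ↦ (∑ d ∈ n.divisors, χ₄ d) * qq τ ^ n),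
    tsum_sum_divisors_χ₄_mul_pow (norm_qq_lt_one hτ), secSum,
    tsum_int_eq_zero_add_two_mul_tsum_pnat heven
      (summable_inv_cos_add_mul 0 (by simpa using im_pi_mul_pos hτ))]
  simp only [zero_add, Int.cast_natCast, inv_cos_eq, exp_nat_mul_eq_qq_pow, mul_div_assoc,
    tsum_mul_left]
  norm_num
  ring

lemma f₂_eq_secSum (hτ : 0 < τ.im) (j : ℕ) :
    f₂ j τ = secSum 0 (2 * (π * τ)) + (-1) ^ j * I * secSum (π * τ) (2 * (π * τ)) := by
  have hz := im_pi_mul_pos hτ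
  have hleft : 4 * E₁₄ (τ / 2) = secSum 0 (2 * (π * τ)) + secSum (π * τ) (2 * (π * τ)) := by
    rw [four_mul_E₁₄_eq_secSum (by simpa using hτ),
      show 2 * (π * (τ / 2)) = π * τ by ring, secSum_eq_add 0 hz, zero_add]
  have hright : 4 * E₁₄ ((τ + 1) / 2) =
      secSum 0 (2 * (π * τ)) - secSum (π * τ) (2 * (π * τ)) := by
    rw [four_mul_E₁₄_eq_secSum (by simpa using hτ),
      show 2 * (π * ((τ + 1) / 2)) = π * τ + π by ring, secSum_add_pi 0 hz, zero_add]
  rw [f₂, four_mul_E₁₄_eq_secSum hτ]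
  linear_combination (-1) ^ j * I / 2 * (hleft - hright)

lemma tsum_inv_cos_sq (hτ : 0 < τ.im) :
    ∑' n : ℤ, (cos (n * (π * τ)))⁻¹ ^ 2 =
      1 + 8 * (sigmaSeries (qq τ) - 4 * sigmaSeries (qq τ ^ 2)) := by
  have heven : Function.Even fun n : ℤ ↦ (cos (n * (π * τ)))⁻¹ ^ 2 := fun n ↦ by simp
  have hterm (n : ℕ+) : (cos (n * (π * τ)))⁻¹ ^ 2 =
      4 * (qq τ ^ (n : ℕ) / (1 + qq τ ^ (n : ℕ)) ^ 2) := by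
    have hsq : exp (n * (π * τ) * I) ^ 2 = qq τ ^ (n : ℕ) := by
      rw [← exp_nat_mul_eq_qq_pow, ← exp_nat_mul]
      push_cast
      ring_nf
    rw [inv_cos_eq, div_pow, mul_pow, hsq]
    ring
  rw [tsum_int_eq_zero_add_two_mul_tsum_pnat heven
    (summable_inv_cos_mul_sq (im_pi_mul_pos hτ)), ← tsum_pow_div_one_add_pow_sq (norm_qq_lt_one hτ)]
  simp only [Int.cast_natCast, hterm, tsum_mul_left]
  norm_num
  ring

lemma tsum_div_sin (hτ : 0 < τ.im) :
    ∑' k : ℕ+, (k : ℂ) / sin (k * (2 * (π * τ))) =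
      -2 * I * (sigmaSeries (qq τ) - sigmaSeries (qq τ ^ 2)) := by
  rw [← tsum_mul_pow_div_one_sub_pow_sq (norm_qq_lt_one hτ), ← tsum_mul_left]
  refine tsum_congr fun k ↦ ?_
  rw [div_eq_mul_inv, inv_sin_eq, exp_nat_mul_eq_qq_pow]
  ring

lemma f₂_zero_mul_f₂_one (hτ : 0 < τ.im) : f₂ 0 τ * f₂ 1 τ = E₂₂ τ := by
  calc f₂ 0 τ * f₂ 1 τ
    _ = secSum 0 (2 * (π * τ)) ^ 2 + secSum (π * τ) (2 * (π * τ)) ^ 2 := by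
      rw [f₂_eq_secSum hτ, f₂_eq_secSum hτ]
      linear_combination -secSum (π * τ) (2 * (π * τ)) ^ 2 * I_sq
    _ = E₂₂ τ := by
      rw [secSum_sq_add_secSum_sq (im_pi_mul_pos hτ), tsum_inv_cos_sq hτ, tsum_div_sin hτ,
        E₂₂_eq_sigmaSeries]
      linear_combination -16 * (sigmaSeries (qq τ) - sigmaSeries (qq τ ^ 2)) * I_sq

end Product

section AlternatingSeries

section Bounds

variable {R : Type*} [Ring R] [PartialOrder R] [IsOrderedRing R] [TopologicalSpace R]
  [OrderClosedTopology R] {f : ℕ → R}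

lemma tsum_alternating_nonneg (hf : Antitone f) (hs : Summable fun n ↦ (-1) ^ n * f n) :
    0 ≤ ∑' n, (-1) ^ n * f n := by
  simpa using hf.alternating_series_le_tendsto hs.tendsto_sum_tsum_nat 0

lemma tsum_alternating_le_zero_term (hf : Antitone f) (hs : Summable fun n ↦ (-1) ^ n * f n) :
    ∑' n, (-1) ^ n * f n ≤ f 0 := by
  simpa using hf.tendsto_le_alternating_series hs.tendsto_sum_tsum_nat 0

end Bounds

variable {t : ℝ}

lemma summable_alternating_inv_cosh (ht : 0 < t) :
    Summable fun n : ℤ ↦ (-1 : ℝ) ^ n * (Real.cosh (n * t))⁻¹ := by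
  refine .of_norm ((summable_inv_cos_add_mul 0 (z := t * I) (by simpa using ht)).norm.congr
    fun n ↦ ?_)
  rw [zero_add, ← mul_assoc, cos_mul_I, ← ofReal_intCast, ← ofReal_mul, ← ofReal_cosh,
    ← ofReal_inv, norm_real]
  simp

lemma summable_alternating_inv_sinh (ht : 0 < t) :
    Summable fun n : ℤ ↦ (-1 : ℝ) ^ n * (Real.sinh ((n + 1 / 2) * t))⁻¹ := by
  refine .of_norm ((summable_inv_cos_add_mul (t / 2 * I + π / 2) (z := t * I)
    (by simpa using ht)).norm.congr fun n ↦ ?_)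
  rw [show t / 2 * I + π / 2 + n * (t * I) = ((n + 1 / 2) * t : ℝ) * I + π / 2 by push_cast; ring,
    cos_add_pi_div_two, sin_mul_I, ← ofReal_sinh, norm_inv, norm_neg, norm_mul, norm_I, norm_real]
  simp

lemma antitone_inv_cosh_succ_mul (ht : 0 ≤ t) :
    Antitone fun n : ℕ ↦ (Real.cosh ((n + 1) * t))⁻¹ := fun m n hmn ↦ by
  dsimp only
  gcongr
  rw [Real.cosh_le_cosh, abs_of_nonneg (by positivity), abs_of_nonneg (by positivity)]
  gcongr

lemma antitone_inv_sinh_mul (ht : 0 < t) :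
    Antitone fun n : ℕ ↦ (Real.sinh ((n + 1 / 2) * t))⁻¹ := fun m n hmn ↦ by
  dsimp only
  have : 0 < Real.sinh ((m + 1 / 2) * t) := Real.sinh_pos_iff.mpr (by positivity)
  gcongr
  rw [Real.sinh_le_sinh]
  gcongr

lemma tsum_alternating_inv_cosh_pos (ht : 0 < t) (hcosh : 2 < Real.cosh t) :
    0 < ∑' n : ℤ, (-1 : ℝ) ^ n * (Real.cosh (n * t))⁻¹ := by
  have hs := summable_alternating_inv_cosh ht
  have heven : Function.Even fun n : ℤ ↦ (-1 : ℝ) ^ n * (Real.cosh (n * t))⁻¹ := fun n ↦ by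
    simp [zpow_neg, ← inv_zpow]
  have hterm (n : ℕ) : (-1 : ℝ) ^ ((n + 1 : ℕ) : ℤ) * (Real.cosh (((n + 1 : ℕ) : ℤ) * t))⁻¹ =
      -((-1 : ℝ) ^ n * (Real.cosh ((n + 1) * t))⁻¹) := by
    rw [zpow_natCast, pow_succ]
    push_cast
    ring
  have hs' : Summable fun n : ℕ ↦ (-1 : ℝ) ^ n * (Real.cosh ((n + 1) * t))⁻¹ := by
    have hinj : Function.Injective fun n : ℕ ↦ ((n + 1 : ℕ) : ℤ) := fun m n h ↦ by simpa using h
    exact summable_neg_iff.mp ((hs.comp_injective hinj).congr hterm)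
  have hle : ∑' n : ℕ, (-1 : ℝ) ^ n * (Real.cosh ((n + 1) * t))⁻¹ ≤ (Real.cosh t)⁻¹ := by
    simpa using tsum_alternating_le_zero_term (antitone_inv_cosh_succ_mul ht.le) hs'
  have hlt : (Real.cosh t)⁻¹ < 2⁻¹ := inv_strictAnti₀ zero_lt_two hcosh
  rw [tsum_int_eq_zero_add_two_mul_tsum_pnat heven hs,
    tsum_pnat_eq_tsum_succ (f := fun n : ℕ ↦ (-1 : ℝ) ^ (n : ℤ) * (Real.cosh ((n : ℤ) * t))⁻¹)]
  simp only [hterm, tsum_neg, zpow_zero, Int.cast_zero, zero_mul, Real.cosh_zero, inv_one,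
    two_nsmul]
  linarith

lemma tsum_alternating_inv_sinh_nonneg (ht : 0 < t) :
    0 ≤ ∑' n : ℤ, (-1 : ℝ) ^ n * (Real.sinh ((n + 1 / 2) * t))⁻¹ := by
  have hs := summable_alternating_inv_sinh ht
  have hs' : Summable fun n : ℕ ↦ (-1 : ℝ) ^ n * (Real.sinh ((n + 1 / 2) * t))⁻¹ := by
    simpa [Function.comp_def] using hs.comp_injective Nat.cast_injective
  have hneg (n : ℕ) : (-1 : ℝ) ^ (-((n : ℤ) + 1)) *
      (Real.sinh (((-((n : ℤ) + 1) : ℤ) + 1 / 2) * t))⁻¹ =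
      (-1 : ℝ) ^ n * (Real.sinh ((n + 1 / 2) * t))⁻¹ := by
    have harg : ((-((n : ℤ) + 1) : ℤ) + 1 / 2) * t = -((n + 1 / 2) * t) := by push_cast; ring
    rw [harg, Real.sinh_neg, zpow_neg, ← inv_zpow, inv_neg, inv_one, zpow_add_one₀ (by simp),
      zpow_natCast]
    ring
  rw [tsum_of_nat_of_neg_add_one (by simpa using hs') (by simpa only [hneg] using hs')]
  simp only [hneg, zpow_natCast, Int.cast_natCast]
  have := tsum_alternating_nonneg (antitone_inv_sinh_mul ht) hs'
  positivity

end AlternatingSeries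

section Zeros

lemma E₂_eq_E2 (z : UpperHalfPlane) : E₂ z = EisensteinSeries.E2 z := by
  rw [EisensteinSeries.E2_eq_tsum_cexp, E₂_eq_sigmaSeries]
  rfl

lemma E₂_add_one (τ : ℂ) : E₂ (τ + 1) = E₂ τ := by rw [E₂, E₂, qq_add_one]

lemma E₁₄_add_one (τ : ℂ) : E₁₄ (τ + 1) = E₁₄ τ := by rw [E₁₄, E₁₄, qq_add_one]

lemma E₂₂_add_one (τ : ℂ) : E₂₂ (τ + 1) = E₂₂ τ := by
  rw [E₂₂, E₂₂, show 2 * (τ + 1) = 2 * τ + 1 + 1 by ring, E₂_add_one, E₂_add_one, E₂_add_one]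

lemma f₂_zero_add_one (τ : ℂ) : f₂ 0 (τ + 1) = f₂ 1 τ := by
  rw [f₂, f₂, E₁₄_add_one, show (τ + 1 + 1) / 2 = τ / 2 + 1 by ring, E₁₄_add_one]
  ring

lemma E₂_neg_inv {τ : ℂ} (hτ : 0 < τ.im) : E₂ (-1 / τ) = τ ^ 2 * E₂ τ - 6 * I * τ / π := by
  obtain ⟨z, rfl⟩ : ∃ z : UpperHalfPlane, (z : ℂ) = τ := ⟨⟨τ, hτ⟩, rfl⟩
  have hS : -1 / (z : ℂ) = (ModularGroup.S • z : UpperHalfPlane) := by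
    rw [UpperHalfPlane.modular_S_smul]
    change -1 / (z : ℂ) = (-(z : ℂ))⁻¹
    rw [inv_neg, neg_div, one_div]
  have hz := z.ne_zero
  have hpi : (π : ℂ) ≠ 0 := ofReal_ne_zero.mpr Real.pi_ne_zero
  rw [hS, E₂_eq_E2, E₂_eq_E2]
  simp only [EisensteinSeries.E2, Pi.smul_apply, smul_eq_mul]
  rw [EisensteinSeries.G2_S_transform z, riemannZeta_two]
  field_simp
  ring

lemma E₂₂_neg_inv_two_mul {τ : ℂ} (hτ : 0 < τ.im) :
    E₂₂ (-1 / (2 * τ)) = -2 * τ ^ 2 * E₂₂ τ := by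
  have hτ2 : 0 < (2 * τ).im := by simpa using hτ
  rw [E₂₂, E₂₂, show 2 * (-1 / (2 * τ)) = -1 / τ by field_simp, E₂_neg_inv hτ, E₂_neg_inv hτ2]
  ring

lemma E₂₂_one_add_I_div_two : E₂₂ ((1 + I) / 2) = 0 := by
  have hfricke : -1 / (2 * ((1 + I) / 2)) + 1 = (1 + I) / 2 := by
    have : 1 + I ≠ 0 := fun h ↦ by simpa using congrArg re h
    field_simp
    linear_combination -I_sq
  have h := E₂₂_neg_inv_two_mul (τ := (1 + I) / 2) (by simp)
  rw [← E₂₂_add_one, hfricke] at h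
  have hfactor : (1 + I) * E₂₂ ((1 + I) / 2) = 0 := by
    linear_combination h - E₂₂ ((1 + I) / 2) / 2 * I_sq
  exact (mul_eq_zero.mp hfactor).resolve_left fun h ↦ by simpa using congrArg re h

lemma cos_add_intCast_mul_pi (z : ℂ) (n : ℤ) : cos (z + n * π) = (-1) ^ n * cos z := by
  rw [cos_antiperiodic.add_int_mul_eq, Int.cast_negOnePow]

lemma f₂_one_one_add_I_div_two : f₂ 1 ((1 + I) / 2) =
    ((∑' n : ℤ, (-1 : ℝ) ^ n * (Real.cosh (n * π))⁻¹ +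
      ∑' n : ℤ, (-1 : ℝ) ^ n * (Real.sinh ((n + 1 / 2) * π))⁻¹ : ℝ) : ℂ) := by
  have hcosh (n : ℤ) : cos (0 + n * (2 * (π * ((1 + I) / 2)))) = (-1) ^ n * cosh (n * π) := by
    rw [← cos_mul_I, ← cos_add_intCast_mul_pi]
    ring_nf
  have hsinh (n : ℤ) : cos (π * ((1 + I) / 2) + n * (2 * (π * ((1 + I) / 2)))) =
      (-1) ^ n * -(sinh ((n + 1 / 2) * π) * I) := by
    rw [← sin_mul_I, ← cos_add_pi_div_two, ← cos_add_intCast_mul_pi]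
    ring_nf
  rw [f₂_eq_secSum (by simp), secSum, secSum, ← tsum_mul_left]
  simp only [hcosh, hsinh]
  push_cast
  congr 1 <;> refine tsum_congr fun n ↦ ?_
  · rw [mul_inv, ← inv_zpow, inv_neg, inv_one]
  · rw [mul_inv, ← inv_zpow, inv_neg, inv_one, inv_neg, mul_inv, inv_I]
    linear_combination -(-1 : ℂ) ^ n * (sinh ((n + 1 / 2) * π))⁻¹ * I_sq

lemma f₂_one_one_add_I_div_two_ne_zero : f₂ 1 ((1 + I) / 2) ≠ 0 := by
  have hcosh : 2 < Real.cosh π := by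
    linarith [Real.pi_gt_three, Real.self_lt_sinh_iff.mpr Real.pi_pos, Real.sinh_lt_cosh π]
  rw [f₂_one_one_add_I_div_two, ofReal_ne_zero]
  exact (add_pos_of_pos_of_nonneg (tsum_alternating_inv_cosh_pos Real.pi_pos hcosh)
    (tsum_alternating_inv_sinh_nonneg Real.pi_pos)).ne'

lemma f₂_zero_one_add_I_div_two : f₂ 0 ((1 + I) / 2) = 0 := by
  have h := f₂_zero_mul_f₂_one (τ := (1 + I) / 2) (by simp)
  rw [E₂₂_one_add_I_div_two] at h
  exact (mul_eq_zero.mp h).resolve_right f₂_one_one_add_I_div_two_ne_zero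

end Zeros

theorem stmt9 :
    (∀ τ : ℂ, 0 < τ.im → f₂ 0 τ * f₂ 1 τ = E₂₂ τ) ∧
    (∀ j : ℕ, j < 2 → f₂ j (((-1 : ℂ) ^ j + Complex.I) / 2) = 0) := by
  refine ⟨fun τ hτ ↦ f₂_zero_mul_f₂_one hτ, fun j hj ↦ ?_⟩
  interval_cases j
  · simpa using f₂_zero_one_add_I_div_two
  · rw [← f₂_zero_add_one, show ((-1 : ℂ) ^ 1 + I) / 2 + 1 = (1 + I) / 2 by ring]
    exact f₂_zero_one_add_I_div_two
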